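/- arXiv:2408.02174 — 2 statements merged into one kernel-verified Lean document; each statement's English description precedes it below -/
import Mathlib

section
/- For every x ∈ ℝᵐ, the set Nash(x) of lower-level Nash equilibria at x is nonempty; that is, there exists a profile y* ∈ ℝᴵ such that for every follower i, y*ᵢ ∈ Sᵢ(x) and φᵢ(x, y*) ≤ φᵢ(x, y) for every profile y that agrees with y* in all coordinates except possibly the i-th and whose i-th coordinate lies in Sᵢ(x). (This is the Kakutani fixed-point step in the proof of the paper's Theorem 2.) -/
open Real

/-!
For a player `i`, let `A i` and `B i` be the closed sets of profiles at which no downward,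
respectively no upward, deviation of `i` is profitable. Quasiconvexity says that a profitable
deviation on either side of `y i` excludes one on the other, so `A i` and `B i` cover the box of
feasible profiles; trivially `A i` contains its lower `i`-th face and `B i` its upper one. A profile
in all of these sets is an equilibrium, and the Poincaré–Miranda theorem produces one.

Poincaré–Miranda follows by compactness from its version on a grid: if `L c` is a `0`-`1` function
of the grid points, equal to `0` on the lower and to `1` on the upper `c`-th face of the grid, then
on some unit cube no `L c` is constant. Indeed the cubical cochain `dL₁ ⌣ ⋯ ⌣ dLₙ` modulo two
vanishes on every other unit cube, while `dL₁ ⌣ ω = d(L₁ ω)` for `ω = dL₂ ⌣ ⋯ ⌣ dLₙ` and the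
Stokes formula reduce its sum over the grid to the sum of `ω` over the upper first face, hence
inductively to `1`.
-/

section LatticeSums

open Finset

variable {ι M : Type*} [DecidableEq ι]

theorem sum_sum_erase_eq_zero [AddCommMonoid M] (S : Finset ι) {h : ι → ι → M}
    (hswap : ∀ c d, h c d + h d c = 0) : ∑ c ∈ S, ∑ d ∈ S.erase c, h c d = 0 := by
  rw [sum_sigma']
  refine sum_involution (fun z _ => ⟨z.2, z.1⟩) ?_ ?_ ?_ fun _ _ => rfl
  · exact fun z _ => hswap z.1 z.2
  · rintro ⟨c, d⟩ hcd - heq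
    simp only [mem_sigma, mem_erase] at hcd
    exact hcd.2.1 (congrArg Sigma.fst heq)
  · rintro ⟨c, d⟩ hcd
    simp only [mem_sigma, mem_erase] at hcd ⊢
    exact ⟨hcd.2.2, hcd.2.1.symm, hcd.1⟩

variable [Fintype ι]

theorem sum_piFinset_eq_sum_update [AddCommMonoid M] {α : ι → Type*}
    (s : ∀ i, Finset (α i)) (c : ι) (g : (∀ i, α i) → M) :
    ∑ x ∈ Fintype.piFinset s, g x =
      ∑ t ∈ s c, ∑ x ∈ Fintype.piFinset (Function.update s c {t}), g x := by
  classical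
  rw [← sum_fiberwise_of_maps_to (g := fun x => x c) fun x hx => Fintype.mem_piFinset.1 hx c]
  refine sum_congr rfl fun t ht => ?_
  rw [Fintype.piFinset_update_singleton_eq_filter_piFinset_eq s c ht]

theorem sum_piFinset_update_add_single [AddCommMonoid M] (s : ι → Finset ℕ) (c : ι) (t : ℕ)
    (g : (ι → ℕ) → M) :
    ∑ x ∈ Fintype.piFinset (Function.update s c {t}), g (x + Pi.single c 1) =
      ∑ x ∈ Fintype.piFinset (Function.update s c {t + 1}), g x := by
  refine sum_nbij' (· + Pi.single c 1) (· - Pi.single c 1) ?_ ?_ ?_ ?_ fun _ _ => rfl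
  all_goals
    intro x hx
    rw [Fintype.mem_piFinset] at hx
  · refine Fintype.mem_piFinset.2 fun d => ?_
    have := hx d
    by_cases hd : d = c <;> simp_all
  · refine Fintype.mem_piFinset.2 fun d => ?_
    have := hx d
    by_cases hd : d = c <;> simp_all
  · exact add_tsub_cancel_right _ _
  · refine tsub_add_cancel_of_le fun d => ?_
    have := hx d
    by_cases hd : d = c <;> simp_all

theorem sum_piFinset_sub_single [AddCommGroup M] {s : ι → Finset ℕ} {c : ι} {n : ℕ}
    (hs : s c = range n) (g : (ι → ℕ) → M) :
    ∑ x ∈ Fintype.piFinset s, (g (x + Pi.single c 1) - g x) =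
      ∑ x ∈ Fintype.piFinset (Function.update s c {n}), g x -
        ∑ x ∈ Fintype.piFinset (Function.update s c {0}), g x := by
  simp only [sum_piFinset_eq_sum_update s c, hs, sum_sub_distrib, sum_piFinset_update_add_single]
  rw [← sum_sub_distrib,
    sum_range_sub fun t => ∑ x ∈ Fintype.piFinset (Function.update s c {t}), g x]

end LatticeSums

/-- A cochain on the cubical lattice `ι → ℕ`: `ω S x` is its value on the cube with least corner `x`
spanned by the directions in `S`. Cubes carry no orientation, so the values are meant to be taken
in a ring of characteristic two. -/
abbrev CubeCochain (ι R : Type*) := Finset ι → (ι → ℕ) → R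

namespace CubeCochain

open Finset

variable {ι R : Type*} [DecidableEq ι] [CommRing R]

/-- The coboundary of a cochain: its sum over the faces of a cube, the faces through the least
corner being counted negatively. -/
def coboundary (ω : CubeCochain ι R) : CubeCochain ι R := fun S x =>
  ∑ c ∈ S, (ω (S.erase c) (x + Pi.single c 1) - ω (S.erase c) x)

/-- The cup product `df ⌣ ω` of the differential of a function on the lattice with a cochain: `df`
is evaluated on the edges at the least corner of a cube, `ω` on the complementary faces at their
far ends. -/
def diffCup (f : (ι → ℕ) → R) (ω : CubeCochain ι R) : CubeCochain ι R := fun S x =>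
  ∑ c ∈ S, (f (x + Pi.single c 1) - f x) * ω (S.erase c) (x + Pi.single c 1)

/-- The iterated cup product `df₁ ⌣ ⋯ ⌣ dfₖ`, the empty product being the constant `0`-cochain. -/
def diffCupProd (fs : List ((ι → ℕ) → R)) : CubeCochain ι R :=
  fs.foldr diffCup fun S _ => if S = ∅ then 1 else 0

theorem coboundary_coboundary [CharP R 2] (ω : CubeCochain ι R) :
    coboundary (coboundary ω) = 0 := by
  funext S x
  simp only [coboundary, ← sum_sub_distrib]
  refine sum_sum_erase_eq_zero S fun c d => ?_
  rw [erase_right_comm, add_right_comm, sub_sub_sub_comm, CharTwo.add_self_eq_zero]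

theorem coboundary_mul (f : (ι → ℕ) → R) (ω : CubeCochain ι R) :
    coboundary (fun S x => f x * ω S x) = diffCup f ω + fun S x => f x * coboundary ω S x := by
  funext S x
  simp only [coboundary, diffCup, Pi.add_apply, mul_sum, ← sum_add_distrib]
  exact sum_congr rfl fun c _ => by ring

theorem coboundary_mul_of_closed (f : (ι → ℕ) → R) {ω : CubeCochain ι R}
    (hω : coboundary ω = 0) : coboundary (fun S x => f x * ω S x) = diffCup f ω := by
  rw [coboundary_mul, hω]
  simp only [Pi.zero_apply, mul_zero]
  exact add_zero _

theorem coboundary_diffCupProd [CharP R 2] (fs : List ((ι → ℕ) → R)) :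
    coboundary (diffCupProd fs) = 0 := by
  induction fs with
  | nil =>
    funext S x
    simp [coboundary, diffCupProd]
  | cons f fs ih =>
    rw [diffCupProd, List.foldr_cons, ← diffCupProd, ← coboundary_mul_of_closed f ih,
      coboundary_coboundary]

theorem diffCupProd_eq_zero {fs : List ((ι → ℕ) → R)} {f : (ι → ℕ) → R} (hf : f ∈ fs)
    {S : Finset ι} {x : ι → ℕ} (hconst : ∀ y ∈ Set.Icc x (S.piecewise (x + 1) x), f y = f x) :
    diffCupProd fs S x = 0 := by
  induction fs generalizing S x with
  | nil => simp at hf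
  | cons g fs ih =>
    refine sum_eq_zero fun c hc => ?_
    have hsub : Set.Icc (x + Pi.single c 1)
        ((S.erase c).piecewise (x + Pi.single c 1 + 1) (x + Pi.single c 1)) ⊆
        Set.Icc x (S.piecewise (x + 1) x) := by
      refine Set.Icc_subset_Icc le_self_add fun d => ?_
      by_cases hd : d ∈ S <;> by_cases hdc : d = c <;> simp_all [piecewise]
    have hstep : f (x + Pi.single c 1) = f x := by
      refine hconst _ (hsub ⟨le_rfl, ?_⟩)
      exact Finset.le_piecewise_of_le_of_le _ le_self_add le_rfl
    rcases List.mem_cons.1 hf with rfl | hf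
    · rw [hstep, sub_self, zero_mul]
    · have hface : diffCupProd fs (S.erase c) (x + Pi.single c 1) = 0 :=
        ih hf fun y hy => (hconst y (hsub hy)).trans hstep.symm
      rw [← diffCupProd, hface, mul_zero]

variable [Fintype ι]

/-- The least corners of the unit cubes tiling the face of the box `∏ c, [0, p c]` on which each
coordinate `c ∉ S` is frozen at the value `v c`. -/
def boxFace (p v : ι → ℕ) (S : Finset ι) : Finset (ι → ℕ) :=
  Fintype.piFinset (S.piecewise (fun c => range (p c)) fun c => {v c})

theorem mem_boxFace {p v x : ι → ℕ} {S : Finset ι} :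
    x ∈ boxFace p v S ↔ ∀ c, if c ∈ S then x c < p c else x c = v c := by
  rw [boxFace, Fintype.mem_piFinset]
  refine forall_congr' fun c => ?_
  by_cases hc : c ∈ S <;> simp [hc]

theorem piFinset_update_boxFace (p v : ι → ℕ) (S : Finset ι) (c : ι) (t : ℕ) :
    Fintype.piFinset (Function.update (S.piecewise (fun d => range (p d)) fun d => {v d}) c {t}) =
      boxFace p (Function.update v c t) (S.erase c) := by
  rw [boxFace]
  congr 1
  funext d
  by_cases hd : d = c
  · subst hd
    simp
  · by_cases hdS : d ∈ S <;> simp [hd, hdS]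

theorem sum_boxFace_coboundary (ω : CubeCochain ι R) (p v : ι → ℕ) (S : Finset ι) :
    ∑ x ∈ boxFace p v S, coboundary ω S x =
      ∑ c ∈ S, (∑ x ∈ boxFace p (Function.update v c (p c)) (S.erase c), ω (S.erase c) x -
        ∑ x ∈ boxFace p (Function.update v c 0) (S.erase c), ω (S.erase c) x) := by
  simp only [coboundary]
  rw [sum_comm]
  refine sum_congr rfl fun c hc => ?_
  rw [← piFinset_update_boxFace, ← piFinset_update_boxFace]
  exact sum_piFinset_sub_single (by simp [hc]) (ω (S.erase c))

theorem diffCupProd_eq_zero_of_mem_boxFace {fs : List ((ι → ℕ) → R)} {f : (ι → ℕ) → R}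
    (hf : f ∈ fs) {p x : ι → ℕ} {S : Finset ι} {c : ι} {t : ℕ} {r : R} (ht : t ≤ p c)
    (hface : ∀ y ≤ p, y c = t → f y = r)
    (hx : x ∈ boxFace p (Function.update p c t) (S.erase c)) :
    diffCupProd fs (S.erase c) x = 0 := by
  have hcube : ∀ y ∈ Set.Icc x ((S.erase c).piecewise (x + 1) x), f y = r := by
    rintro y ⟨hxy, hyx⟩
    rw [mem_boxFace] at hx
    refine hface y (fun d => ?_) ?_
    · by_cases hd : d ∈ S.erase c
      · have hxd : x d < p d := by simpa only [if_pos hd] using hx d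
        have hyd : y d ≤ x d + 1 := (hyx d).trans_eq (piecewise_eq_of_mem _ _ _ hd)
        exact hyd.trans hxd
      · have hxd : x d = Function.update p c t d := by simpa only [if_neg hd] using hx d
        have hyd : y d ≤ x d := (hyx d).trans_eq (piecewise_eq_of_notMem _ _ _ hd)
        exact (hyd.trans_eq hxd).trans (update_le_self_iff.2 ht d)
    · have hxc : x c = t := by simpa using hx c
      have hyc : y c ≤ x c := by simpa using hyx c
      exact (hyc.antisymm (hxy c)).trans hxc
  have hxcube : x ∈ Set.Icc x ((S.erase c).piecewise (x + 1) x) :=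
    ⟨le_rfl, Finset.le_piecewise_of_le_of_le _ le_self_add le_rfl⟩
  exact diffCupProd_eq_zero hf fun y hy => (hcube y hy).trans (hcube x hxcube).symm

theorem sum_boxFace_mul_diffCupProd_eq_zero {fs : List ((ι → ℕ) → R)} {f : (ι → ℕ) → R}
    (hf : f ∈ fs) {p : ι → ℕ} {c : ι} {t : ℕ} {r : R} (ht : t ≤ p c)
    (hface : ∀ y ≤ p, y c = t → f y = r) (g : (ι → ℕ) → R) (S : Finset ι) :
    ∑ x ∈ boxFace p (Function.update p c t) (S.erase c), g x * diffCupProd fs (S.erase c) x = 0 :=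
  sum_eq_zero fun x hx => by
    rw [diffCupProd_eq_zero_of_mem_boxFace hf ht hface hx, mul_zero]

theorem le_of_mem_boxFace {p v x : ι → ℕ} {S : Finset ι} (hv : v ≤ p) (hx : x ∈ boxFace p v S) :
    x ≤ p := by
  intro c
  have := mem_boxFace.1 hx c
  have := hv c
  split_ifs at * <;> lia

theorem sum_boxFace_diffCupProd [CharP R 2] {p : ι → ℕ} {L : ι → (ι → ℕ) → R}
    (hL₀ : ∀ c, ∀ x ≤ p, x c = 0 → L c x = 0) (hL₁ : ∀ c, ∀ x ≤ p, x c = p c → L c x = 1)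
    {l : List ι} (hl : l.Nodup) :
    ∑ x ∈ boxFace p p l.toFinset, diffCupProd (l.map L) l.toFinset x = 1 := by
  induction l with
  | nil =>
    have hcorner : boxFace p p ∅ = {p} := by
      ext x
      simp [mem_boxFace, funext_iff]
    simp [diffCupProd, hcorner]
  | cons a l ih =>
    obtain ⟨hal, hl⟩ := List.nodup_cons.1 hl
    have herase : (insert a l.toFinset).erase a = l.toFinset :=
      erase_insert (by rwa [List.mem_toFinset])
    have hexact : diffCupProd ((a :: l).map L) =
        coboundary fun S x => L a x * diffCupProd (l.map L) S x :=
      (coboundary_mul_of_closed (L a) (coboundary_diffCupProd (l.map L))).symm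
    -- Only the faces orthogonal to `a` contribute: on the others some factor `L c` is constant.
    rw [hexact, sum_boxFace_coboundary, List.toFinset_cons, sum_eq_single_of_mem a (by simp)]
    · have hupper : ∀ x ∈ boxFace p p l.toFinset, L a x * diffCupProd (l.map L) l.toFinset x =
          diffCupProd (l.map L) l.toFinset x := by
        intro x hx
        have hxa : x a = p a := by simpa [hal] using mem_boxFace.1 hx a
        rw [hL₁ a x (le_of_mem_boxFace le_rfl hx) hxa, one_mul]
      have hlower : ∀ x ∈ boxFace p (Function.update p a 0) l.toFinset,
          L a x * diffCupProd (l.map L) l.toFinset x = 0 := by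
        intro x hx
        have hxa : x a = 0 := by simpa [hal] using mem_boxFace.1 hx a
        have hxp : x ≤ p := le_of_mem_boxFace (update_le_self_iff.2 (Nat.zero_le _)) hx
        rw [hL₀ a x hxp hxa, zero_mul]
      rw [herase, Function.update_eq_self, sum_congr rfl hupper, sum_eq_zero hlower, sub_zero,
        ih hl]
    · intro c hc hca
      have hmem : L c ∈ l.map L := List.mem_map_of_mem (by simpa [hca] using hc)
      rw [sum_boxFace_mul_diffCupProd_eq_zero hmem le_rfl (hL₁ c),
        sum_boxFace_mul_diffCupProd_eq_zero hmem (Nat.zero_le _) (hL₀ c), sub_zero]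

end CubeCochain

theorem exists_cube_forall_not_constant {ι : Type*} [Finite ι] {p : ι → ℕ} {U : ι → Set (ι → ℕ)}
    (hU₀ : ∀ c, ∀ x ≤ p, x c = 0 → x ∉ U c) (hU₁ : ∀ c, ∀ x ≤ p, x c = p c → x ∈ U c) :
    ∃ q, (∀ c, q c < p c) ∧
      ∀ c, (∃ x ∈ Set.Icc q (q + 1), x ∈ U c) ∧ ∃ x ∈ Set.Icc q (q + 1), x ∉ U c := by
  classical
  cases nonempty_fintype ι
  let L : ι → (ι → ℕ) → ZMod 2 := fun c => (U c).indicator 1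
  have hsum : ∑ x ∈ CubeCochain.boxFace p p Finset.univ,
      CubeCochain.diffCupProd (Finset.univ.toList.map L) Finset.univ x = 1 := by
    simpa using CubeCochain.sum_boxFace_diffCupProd (L := L)
      (fun c x hxp hx => Set.indicator_of_notMem (hU₀ c x hxp hx) _)
      (fun c x hxp hx => Set.indicator_of_mem (hU₁ c x hxp hx) _) Finset.univ.nodup_toList
  obtain ⟨q, hq, hne⟩ := Finset.exists_ne_zero_of_sum_ne_zero (hsum.trans_ne one_ne_zero)
  refine ⟨q, by simpa [CubeCochain.mem_boxFace] using hq, fun c => ?_⟩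
  have hLc : L c ∈ Finset.univ.toList.map L := List.mem_map_of_mem (by simp)
  have hqmem : q ∈ Set.Icc q (q + 1) := ⟨le_rfl, le_self_add⟩
  constructor <;> by_contra! hconst <;>
    refine hne (CubeCochain.diffCupProd_eq_zero hLc fun y hy => ?_) <;>
    rw [Finset.piecewise_univ] at hy <;>
    simp [L, hconst y hy, hconst q hqmem]

section PoincareMiranda

open Set Metric

variable {ι : Type*} {a b : ι → ℝ} {n : ℕ}

/-- The point with index `x` in the grid cutting each edge of the box `Icc a b` into `n` equal
parts. -/
noncomputable def gridPoint (a b : ι → ℝ) (n : ℕ) (x : ι → ℕ) : ι → ℝ := fun i =>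
  AffineMap.lineMap (a i) (b i) (x i / n : ℝ)

theorem gridPoint_mem_Icc (hab : a ≤ b) {x : ι → ℕ} (hx : ∀ i, x i ≤ n) :
    gridPoint a b n x ∈ Icc a b := by
  rw [← pi_univ_Icc]
  intro i _
  refine (convex_Icc _ _).lineMap_mem (left_mem_Icc.2 (hab i)) (right_mem_Icc.2 (hab i))
    ⟨by positivity, div_le_one_of_le₀ (Nat.cast_le.2 (hx i)) n.cast_nonneg⟩

theorem dist_gridPoint_le [Fintype ι] {q x : ι → ℕ} (hx : x ∈ Icc q (q + 1)) :
    dist (gridPoint a b n q) (gridPoint a b n x) ≤ dist a b / n := by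
  refine (dist_pi_le_iff (by positivity)).2 fun i => ?_
  have hstep : dist (q i : ℝ) (x i) ≤ 1 := by
    have hqx : (q i : ℝ) ≤ x i := mod_cast hx.1 i
    have hxq : (x i : ℝ) ≤ q i + 1 := mod_cast hx.2 i
    rw [dist_comm, Real.dist_eq, abs_of_nonneg (sub_nonneg.2 hqx)]
    linarith
  calc dist (gridPoint a b n q i) (gridPoint a b n x i)
      = dist (q i : ℝ) (x i) / n * dist (a i) (b i) := by
        rw [gridPoint, gridPoint, dist_lineMap_lineMap, Real.dist_eq (q i / n : ℝ), ← sub_div,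
          abs_div, Nat.abs_cast, ← Real.dist_eq]
    _ ≤ 1 / n * dist a b := by gcongr; exact dist_le_pi_dist a b i
    _ = dist a b / n := one_div_mul_eq_div _ _

theorem exists_forall_mem_thickening_of_cover [Fintype ι] (hab : a ≤ b)
    {A B : ι → Set (ι → ℝ)} (hcover : ∀ i, Icc a b ⊆ A i ∪ B i)
    (hA : ∀ i, ∀ y ∈ Icc a b, y i = a i → y ∈ A i)
    (hB : ∀ i, ∀ y ∈ Icc a b, y i = b i → y ∈ B i) {ε : ℝ} (hε : 0 < ε) :
    ∃ z ∈ Icc a b, ∀ i, z ∈ thickening ε (A i) ∧ z ∈ thickening ε (B i) := by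
  obtain ⟨n, hn⟩ := exists_nat_gt (dist a b / ε)
  have hn₀ : (0 : ℝ) < n := (by positivity : 0 ≤ dist a b / ε).trans_lt hn
  have hmesh : dist a b / n < ε := (div_lt_comm₀ hε hn₀).1 hn
  let U : ι → Set (ι → ℕ) := fun c => {x | x c ≠ 0 ∧ gridPoint a b n x ∈ B c}
  have hU₁ : ∀ c, ∀ x ≤ fun _ => n, x c = n → x ∈ U c := by
    refine fun c x hx hxc => ⟨hxc.trans_ne (Nat.cast_ne_zero.1 hn₀.ne'), ?_⟩
    exact hB c _ (gridPoint_mem_Icc hab hx) (by simp [gridPoint, hxc, hn₀.ne'])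
  obtain ⟨q, hq, hcube⟩ :=
    exists_cube_forall_not_constant (U := U) (fun c x _ hx₀ hx => hx.1 hx₀) hU₁
  refine ⟨gridPoint a b n q, gridPoint_mem_Icc hab fun i => (hq i).le, fun i => ?_⟩
  obtain ⟨⟨x, hx, -, hxB⟩, y, hy, hyB⟩ := hcube i
  refine ⟨mem_thickening_iff.2 ⟨_, ?_, (dist_gridPoint_le hy).trans_lt hmesh⟩,
    mem_thickening_iff.2 ⟨_, hxB, (dist_gridPoint_le hx).trans_lt hmesh⟩⟩
  have hyIcc : gridPoint a b n y ∈ Icc a b :=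
    gridPoint_mem_Icc hab fun i => (hy.2 i).trans (hq i)
  by_cases hy₀ : y i = 0
  · exact hA i _ hyIcc (by simp [gridPoint, hy₀])
  · exact (hcover i hyIcc).resolve_right fun h => hyB ⟨hy₀, h⟩

theorem exists_forall_mem_of_mem_thickening {α κ : Type*} [PseudoMetricSpace α] {K : Set α}
    (hK : IsCompact K) {C : κ → Set α} (hC : ∀ j, IsClosed (C j))
    (h : ∀ ε > 0, ∃ z ∈ K, ∀ j, z ∈ thickening ε (C j)) : ∃ z ∈ K, ∀ j, z ∈ C j := by
  choose u huK huC using fun N : ℕ => h (1 / (N + 1)) Nat.one_div_pos_of_nat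
  obtain ⟨z, hzK, θ, hθ, hlim⟩ := hK.tendsto_subseq huK
  refine ⟨z, hzK, fun j => ?_⟩
  rw [← (hC j).closure_eq, closure_eq_iInter_cthickening]
  refine mem_iInter₂.2 fun δ hδ => isClosed_cthickening.mem_of_tendsto hlim ?_
  have hsmall : ∀ᶠ k in Filter.atTop, 1 / ((θ k : ℝ) + 1) < δ :=
    (tendsto_one_div_add_atTop_nhds_zero_nat.comp hθ.tendsto_atTop).eventually_lt_const hδ
  filter_upwards [hsmall] with k hk
  exact thickening_subset_cthickening δ _ (thickening_mono hk.le _ (huC (θ k) j))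

/-- The Poincaré–Miranda theorem, for closed covers. -/
theorem exists_forall_mem_inter_of_cover [Finite ι] (hab : a ≤ b) {A B : ι → Set (ι → ℝ)}
    (hA : ∀ i, IsClosed (A i)) (hB : ∀ i, IsClosed (B i)) (hcover : ∀ i, Icc a b ⊆ A i ∪ B i)
    (hA₀ : ∀ i, ∀ y ∈ Icc a b, y i = a i → y ∈ A i)
    (hB₁ : ∀ i, ∀ y ∈ Icc a b, y i = b i → y ∈ B i) :
    ∃ y ∈ Icc a b, ∀ i, y ∈ A i ∩ B i := by
  cases nonempty_fintype ι
  obtain ⟨y, hy, hmem⟩ := exists_forall_mem_of_mem_thickening isCompact_Icc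
    (C := Sum.elim A B) (Sum.forall.2 ⟨hA, hB⟩) fun ε hε => by
      obtain ⟨z, hz, hzAB⟩ := exists_forall_mem_thickening_of_cover hab hcover hA₀ hB₁ hε
      exact ⟨z, hz, Sum.forall.2 ⟨fun i => (hzAB i).1, fun i => (hzAB i).2⟩⟩
  exact ⟨y, hy, fun i => ⟨hmem (Sum.inl i), hmem (Sum.inr i)⟩⟩

end PoincareMiranda

section Nash

open Set Function

variable {ι β : Type*} [DecidableEq ι]

/-- The profile `y` is a Nash equilibrium of the game in which player `i` picks a strategy in `K i`
and pays the cost `φ i`, to be minimised. -/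
def IsNashEquilibrium [LE β] {α : ι → Type*} (K : ∀ i, Set (α i)) (φ : ι → (∀ i, α i) → β)
    (y : ∀ i, α i) : Prop :=
  ∀ i, y i ∈ K i ∧ ∀ t ∈ K i, φ i y ≤ φ i (update y i t)

/-- The profiles at which player `i`, with cost `ψ`, does not gain by replacing the strategy `y i`
by `op t (y i)` for any `t`. For `op = min` and `op = max` these are the downward and the upward
deviations. -/
def stableSet [LE β] {α : ι → Type*} (K : ∀ i, Set (α i)) (ψ : (∀ i, α i) → β) (i : ι)
    (op : α i → α i → α i) : Set (∀ i, α i) :=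
  {y ∈ univ.pi K | ∀ t ∈ K i, ψ y ≤ ψ (update y i (op t (y i)))}

theorem isClosed_stableSet [TopologicalSpace β] [Preorder β] [OrderClosedTopology β]
    {α : ι → Type*} [∀ i, TopologicalSpace (α i)] {K : ∀ i, Set (α i)}
    (hK : ∀ i, IsClosed (K i)) {ψ : (∀ i, α i) → β} (hψ : ContinuousOn ψ (univ.pi K)) {i : ι}
    {op : α i → α i → α i} (hop : ∀ t, Continuous (op t))
    (hopK : ∀ t ∈ K i, ∀ s ∈ K i, op t s ∈ K i) : IsClosed (stableSet K ψ i op) := by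
  have hpi : IsClosed (univ.pi K) := isClosed_set_pi fun i _ => hK i
  have hclosed : ∀ t ∈ K i,
      IsClosed {y ∈ univ.pi K | ψ y ≤ ψ (update y i (op t (y i)))} := by
    intro t ht
    refine hpi.isClosed_le hψ (hψ.comp (Continuous.continuousOn ?_) fun y hy => ?_)
    · exact continuous_id.update i ((hop t).comp (continuous_apply i))
    · exact (update_mem_pi_iff_of_mem hy).2 fun _ => hopK t ht _ (hy i trivial)
  have hinter : stableSet K ψ i op =
      univ.pi K ∩ ⋂ t ∈ K i, {y ∈ univ.pi K | ψ y ≤ ψ (update y i (op t (y i)))} := by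
    ext y
    simp only [stableSet, mem_inter_iff, mem_iInter, mem_ofPred_eq]
    exact ⟨fun h => ⟨h.1, fun t ht => ⟨h.1, h.2 t ht⟩⟩, fun h => ⟨h.1, fun t ht => (h.2 t ht).2⟩⟩
  rw [hinter]
  exact hpi.inter (isClosed_biInter hclosed)

theorem subset_stableSet_min_union_max [LinearOrder β] {K : ι → Set ℝ} {ψ : (ι → ℝ) → β} {i : ι}
    (hψ : ∀ y ∈ univ.pi K, QuasiconvexOn ℝ (K i) fun t => ψ (update y i t)) :
    univ.pi K ⊆ stableSet K ψ i min ∪ stableSet K ψ i max := by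
  intro y hy
  by_contra! hunstable
  simp only [stableSet, mem_union, mem_ofPred_eq, hy, true_and, not_or, not_forall, not_le]
    at hunstable
  obtain ⟨⟨t, ht, hlower⟩, u, hu, hupper⟩ := hunstable
  have hyi : y i ∈ K i := hy i trivial
  obtain ⟨-, hle⟩ : y i ∈ {s ∈ K i | ψ (update y i s) ≤ max _ _} := (hψ y hy _).ordConnected.out
    ⟨min_rec' (· ∈ K i) ht hyi, le_max_left _ _⟩ ⟨max_rec' (· ∈ K i) hu hyi, le_max_right _ _⟩
    ⟨min_le_right t (y i), le_max_right u (y i)⟩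
  rw [update_eq_self] at hle
  exact (max_lt hlower hupper).not_ge hle

theorem mem_stableSet_of_fixed [Preorder β] {α : ι → Type*} {K : ∀ i, Set (α i)}
    {ψ : (∀ i, α i) → β} {i : ι} {op : α i → α i → α i} {y : ∀ i, α i} (hy : y ∈ univ.pi K)
    (hfix : ∀ t ∈ K i, op t (y i) = y i) : y ∈ stableSet K ψ i op :=
  ⟨hy, fun t ht => by rw [hfix t ht, update_eq_self]⟩

theorem isNashEquilibrium_of_forall_mem_stableSet [LE β] {α : ι → Type*}
    [∀ i, LinearOrder (α i)] {K : ∀ i, Set (α i)} {φ : ι → (∀ i, α i) → β} {y : ∀ i, α i}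
    (hy : ∀ i, y ∈ stableSet K (φ i) i min ∩ stableSet K (φ i) i max) :
    IsNashEquilibrium K φ y := by
  refine fun i => ⟨(hy i).1.1 i trivial, fun t ht => ?_⟩
  rcases le_total t (y i) with hle | hle
  · simpa only [min_eq_left hle] using (hy i).1.2 t ht
  · simpa only [max_eq_left hle] using (hy i).2.2 t ht

theorem exists_isNashEquilibrium [Finite ι] [LinearOrder β] [TopologicalSpace β]
    [OrderClosedTopology β] {K : ι → Set ℝ} (hKne : ∀ i, (K i).Nonempty)
    (hKc : ∀ i, IsCompact (K i)) (hKconv : ∀ i, Convex ℝ (K i)) {φ : ι → (ι → ℝ) → β}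
    (hφ : ∀ i, ContinuousOn (φ i) (univ.pi K))
    (hφconv : ∀ i, ∀ y ∈ univ.pi K, QuasiconvexOn ℝ (K i) fun t => φ i (update y i t)) :
    ∃ y, IsNashEquilibrium K φ y := by
  have hIcc : ∀ i, ∃ a b : ℝ, a ≤ b ∧ K i = Icc a b := fun i =>
    have hK : K i = Icc (sInf (K i)) (sSup (K i)) :=
      eq_Icc_of_connected_compact ⟨hKne i, (hKconv i).isPreconnected⟩ (hKc i)
    ⟨_, _, nonempty_Icc.1 (hK ▸ hKne i), hK⟩
  choose a b hab hK using hIcc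
  obtain rfl : K = fun i => Icc (a i) (b i) := funext hK
  have hbox : univ.pi (fun i => Icc (a i) (b i)) = Icc a b := pi_univ_Icc a b
  have hclosed : ∀ i, IsClosed (Icc (a i) (b i)) := fun _ => isClosed_Icc
  obtain ⟨y, -, hy⟩ := exists_forall_mem_inter_of_cover hab
    (A := fun i => stableSet _ (φ i) i min) (B := fun i => stableSet _ (φ i) i max)
    (fun i => isClosed_stableSet hclosed (hφ i) (fun _ => continuous_const.min continuous_id)
      fun _ ht _ hs => min_rec' (· ∈ Icc (a i) (b i)) ht hs)
    (fun i => isClosed_stableSet hclosed (hφ i) (fun _ => continuous_const.max continuous_id)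
      fun _ ht _ hs => max_rec' (· ∈ Icc (a i) (b i)) ht hs)
    (fun i => hbox ▸ subset_stableSet_min_union_max (hφconv i))
    (fun i y hy hyi => mem_stableSet_of_fixed (hbox ▸ hy) fun t ht =>
      min_eq_right (hyi.trans_le ht.1))
    (fun i y hy hyi => mem_stableSet_of_fixed (hbox ▸ hy) fun t ht =>
      max_eq_right (ht.2.trans_eq hyi.symm))
  exact ⟨y, isNashEquilibrium_of_forall_mem_stableSet hy⟩

end Nash

section BudgetSet

/-- The feasible set of a follower with private constraint set `Y`, linear cost `μ` and budget `b`;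
`κ ≥ 0` is the weight `l √Σ` of the robust term. -/
def budgetSet (Y : Set ℝ) (μ κ b : ℝ) : Set ℝ :=
  {y ∈ Y | μ * y + κ * |y| ≤ b}

variable {Y : Set ℝ} {μ κ b : ℝ}

theorem isCompact_budgetSet (hY : IsCompact Y) : IsCompact (budgetSet Y μ κ b) :=
  hY.inter_right (t := {y | μ * y + κ * |y| ≤ b}) (isClosed_le (by fun_prop) continuous_const)

theorem convex_budgetSet (hY : Convex ℝ Y) (hκ : 0 ≤ κ) : Convex ℝ (budgetSet Y μ κ b) := by
  have hlinear : ConvexOn ℝ Y fun y => μ * y := (LinearMap.mulLeft ℝ μ).convexOn hY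
  have habs : ConvexOn ℝ Y fun y => κ * |y| :=
    ((convexOn_univ_norm (E := ℝ)).subset (Set.subset_univ Y) hY).smul hκ
  exact (hlinear.add habs).convex_le b

theorem zero_mem_budgetSet (hY : 0 ∈ Y) (hb : 0 ≤ b) : 0 ∈ budgetSet Y μ κ b :=
  ⟨hY, by simpa using hb⟩

end BudgetSet

/-- The leader's strategy is fixed throughout: `μ i` and `φ i` stand for `μᵢ(x)` and `φᵢ(x, ·)`,
and `κ i` for `lᵢ √Σᵢ`. -/
theorem stmt_11_general {ι β : Type*} [Finite ι] [DecidableEq ι] [LinearOrder β]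
    [TopologicalSpace β] [OrderClosedTopology β] {Y : ι → Set ℝ} (hYc : ∀ i, IsCompact (Y i))
    (hYconv : ∀ i, Convex ℝ (Y i)) (hY0 : ∀ i, 0 ∈ Y i) {μ κ b : ι → ℝ} (hκ : ∀ i, 0 ≤ κ i)
    (hb : ∀ i, 0 ≤ b i) {φ : ι → (ι → ℝ) → β}
    (hφc : ∀ i, ContinuousOn (φ i) (Set.univ.pi fun j => budgetSet (Y j) (μ j) (κ j) (b j)))
    (hφconv : ∀ i, ∀ y ∈ Set.univ.pi fun j => budgetSet (Y j) (μ j) (κ j) (b j),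
      QuasiconvexOn ℝ (budgetSet (Y i) (μ i) (κ i) (b i)) fun t => φ i (Function.update y i t)) :
    ∃ y, IsNashEquilibrium (fun i => budgetSet (Y i) (μ i) (κ i) (b i)) φ y :=
  exists_isNashEquilibrium (fun i => ⟨0, zero_mem_budgetSet (hY0 i) (hb i)⟩)
    (fun i => isCompact_budgetSet (hYc i)) (fun i => convex_budgetSet (hYconv i) (hκ i)) hφc hφconv

/-- Kakutani step of the paper's Theorem 2: the lower-level Nash equilibrium set is nonempty at every leader strategy. -/
theorem stmt_11
    (m I : ℕ) (hm : 1 ≤ m) (hI : 1 ≤ I)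
    (X : Set (Fin m → ℝ)) (hXne : X.Nonempty) (hXc : IsCompact X)
    (f : (Fin m → ℝ) → (Fin I → ℝ) → ℝ)
    (hf : Continuous fun p : (Fin m → ℝ) × (Fin I → ℝ) => f p.1 p.2)
    (Y : Fin I → Set ℝ)
    (hYne : ∀ i, (Y i).Nonempty) (hYc : ∀ i, IsCompact (Y i))
    (hYconv : ∀ i, Convex ℝ (Y i)) (hY0 : ∀ i, (0 : ℝ) ∈ Y i)
    (b l Sig : Fin I → ℝ)
    (hb : ∀ i, 0 < b i) (hl : ∀ i, 0 ≤ l i) (hSig : ∀ i, 0 ≤ Sig i)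
    (μ : Fin I → (Fin m → ℝ) → ℝ) (hμ : ∀ i, Continuous (μ i))
    (S : Fin I → (Fin m → ℝ) → Set ℝ)
    (hS : ∀ i x, S i x = {y ∈ Y i | μ i x * y + l i * Real.sqrt (Sig i) * |y| ≤ b i})
    (φ : Fin I → (Fin m → ℝ) → (Fin I → ℝ) → ℝ)
    (hφc : ∀ i, Continuous fun p : (Fin m → ℝ) × (Fin I → ℝ) => φ i p.1 p.2)
    (hφconv : ∀ i x y, ConvexOn ℝ Set.univ fun t : ℝ => φ i x (Function.update y i t))
    (Nash : (Fin m → ℝ) → Set (Fin I → ℝ))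
    (hNash : ∀ x, Nash x = {y : Fin I → ℝ | ∀ i, y i ∈ S i x ∧
      ∀ t ∈ S i x, φ i x y ≤ φ i x (Function.update y i t)})
    : ∀ x : Fin m → ℝ, (Nash x).Nonempty := by
  intro x
  have hκ : ∀ i, 0 ≤ l i * √(Sig i) := fun i => mul_nonneg (hl i) (sqrt_nonneg _)
  simp only [hNash, hS]
  exact stmt_11_general hYc hYconv hY0 hκ (fun i => (hb i).le)
    (fun i => ((hφc i).comp (.prodMk_right x)).continuousOn) fun i y _ =>
      ((hφconv i x y).subset (Set.subset_univ _) (convex_budgetSet (hYconv i) (hκ i))).quasiconvexOn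
end

section
/- The marginal function V : ℝᵐ → ℝ defined by V(x) = sup { f(x, y) : y ∈ Nash(x) } is upper semicontinuous at every point x ∈ ℝᵐ. (This is the key claim in the proof of the paper's Lemma 6, obtained from the continuity theorem for marginal functions.) -/
open Real

/-!
Each player's feasible correspondence has a closed graph, and by the Slater point `0` it is also
lower hemicontinuous, so a deviation that improves on a limit of equilibria would already improve
on nearby equilibria: the equilibrium correspondence has a closed graph. Its values lie in a fixed
compact set, so it is upper hemicontinuous with compact values, and Berge's theorem applies.

Nonemptiness of the equilibrium sets is essential, because `sSup ∅ = 0` in `ℝ`. It follows from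
Brouwer's theorem: a partition of unity gives the Browder–Fan fixed point theorem for
correspondences with open fibers, hence Ky Fan's minimax inequality, which is applied to the
Nikaido–Isoda function. Brouwer's theorem rests on the no-retraction theorem, by the argument of
Milnor and Rogers: if `g` is `C¹` on a compact convex `K`, vanishes on the frontier and satisfies
`x + g x ∈ K` for `x ∈ K`, then `∫ det (1 + t • Dg)` over the interior of `K` is a polynomial in
`t`; for small `t > 0` the map `x ↦ x + t • g x` is a bijection of the interior, so the polynomial
is constantly the volume of `K`. For a retraction `x ↦ x + g x` of the ball onto its sphere, the
integrand at `t = 1` vanishes identically.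
-/

open Set Filter Topology MeasureTheory

/-! ### Integrals of Jacobian determinants -/

theorem exists_polynomial_eval_eq_det_one_add_smul {R M : Type*} [CommRing R] [Nontrivial R]
    [AddCommGroup M] [Module R M] [Module.Free R M] [Module.Finite R M] (A : M →ₗ[R] M) :
    ∃ p : Polynomial R, p.natDegree ≤ Module.finrank R M ∧
      ∀ t, p.eval t = LinearMap.det (1 + t • A) := by
  let B := LinearMap.toMatrix (Module.finBasis R M) (Module.finBasis R M) A
  refine ⟨(-B).charpolyRev, ?_, fun t => ?_⟩
  · rw [← Matrix.reverse_charpoly]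
    refine (Polynomial.reverse_natDegree_le _).trans ?_
    rw [Matrix.charpoly_natDegree_eq_dim, Fintype.card_fin]
  · rw [← LinearMap.det_toMatrix (Module.finBasis R M), Matrix.charpolyRev,
      ← Polynomial.coe_evalRingHom, RingHom.map_det]
    congr 1
    ext i j
    suffices B i j * t = t * B i j by simpa [B, Matrix.one_apply, LinearMap.toMatrix_one, apply_ite]
    exact mul_comm _ _

-- The interpolation formula at the nodes `0, …, n` spares integrating coefficients, whose
-- measurability in `x` is not available.
theorem exists_polynomial_eval_eq_integral {α : Type*} [MeasurableSpace α] {μ : Measure α}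
    {F : ℝ → α → ℝ} {n : ℕ}
    (hF : ∀ x, ∃ p : Polynomial ℝ, p.natDegree ≤ n ∧ ∀ t, p.eval t = F t x)
    (hint : ∀ t, Integrable (F t) μ) :
    ∃ P : Polynomial ℝ, ∀ t, P.eval t = ∫ x, F t x ∂μ := by
  let node : ℕ → ℝ := Nat.cast
  let nodes := Finset.range (n + 1)
  have hF_eq (t : ℝ) (x : α) :
      F t x = ∑ j ∈ nodes, F (node j) x * (Lagrange.basis nodes node j).eval t := by
    obtain ⟨p, hdeg, hp⟩ := hF x
    have hlt : p.degree < (nodes.card : WithBot ℕ) := by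
      rw [Finset.card_range]
      exact p.degree_le_natDegree.trans_lt (mod_cast Nat.lt_succ_of_le hdeg)
    have heval := congrArg (Polynomial.eval t)
      (Lagrange.eq_interpolate (v := node) Nat.cast_injective.injOn hlt)
    simpa only [Lagrange.interpolate_apply, Polynomial.eval_finsetSum, Polynomial.eval_mul,
      Polynomial.eval_C, hp] using heval
  refine ⟨Lagrange.interpolate nodes node fun j => ∫ x, F (node j) x ∂μ, fun t => ?_⟩
  simp only [hF_eq t, Lagrange.interpolate_apply, Polynomial.eval_finsetSum, Polynomial.eval_mul,
    Polynomial.eval_C]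
  rw [integral_finsetSum _ fun j _ => (hint _).mul_const _]
  simp only [integral_mul_const]

theorem polynomial_eq_C_of_eventually_eval_eq {p : Polynomial ℝ} {a c : ℝ}
    (h : ∀ᶠ t in 𝓝[>] a, p.eval t = c) : p = Polynomial.C c := by
  obtain ⟨u, hau, hu⟩ := mem_nhdsGT_iff_exists_Ioo_subset.1 h
  refine p.eq_of_infinite_eval_eq _ ((Ioo_infinite hau).mono fun t ht => ?_)
  simpa only [mem_ofPred_eq, Polynomial.eval_C] using hu ht

section Perturbation

theorem image_eq_self_of_isOpen_image {X : Type*} [TopologicalSpace X] [T2Space X] {U : Set X}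
    {f : X → X} (hU : IsPreconnected U) (hc : IsCompact (closure U))
    (hf : ContinuousOn f (closure U)) (hmaps : MapsTo f U U)
    (hfix : ∀ x ∈ closure U \ U, f x = x) (hopen : IsOpen (f '' U)) : f '' U = U := by
  refine hmaps.image_subset.antisymm ?_
  rcases U.eq_empty_or_nonempty with rfl | ⟨x, hx⟩
  · exact empty_subset _
  refine hU.subset_of_closure_inter_subset hopen ⟨f x, hmaps hx, mem_image_of_mem f hx⟩ ?_
  rintro y ⟨hy, hyU⟩
  obtain ⟨z, hz, rfl⟩ : y ∈ f '' closure U :=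
    closure_minimal (image_mono subset_closure) (hc.image_of_continuousOn hf).isClosed hy
  by_cases hzU : z ∈ U
  · exact mem_image_of_mem f hzU
  · exact absurd (hfix z ⟨hz, hzU⟩ ▸ hyU) hzU

theorem approximatesLinearOn_id_add {𝕜 E : Type*} [NontriviallyNormedField 𝕜]
    [NormedAddCommGroup E] [NormedSpace 𝕜 E] {g : E → E} {s : Set E} {c : NNReal}
    (hg : LipschitzOnWith c g s) :
    ApproximatesLinearOn (fun x => x + g x) (ContinuousLinearEquiv.refl 𝕜 E : E →L[𝕜] E) s c :=
  LipschitzOnWith.approximatesLinearOn <| by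
    convert! hg using 1
    ext x
    simp

theorem subsingleton_or_lt_inv_nnnorm_refl {E : Type*} [NormedAddCommGroup E] [NormedSpace ℝ E]
    {c : NNReal} (hc : c < 1) :
    Subsingleton E ∨ c < ‖((ContinuousLinearEquiv.refl ℝ E).symm : E →L[ℝ] E)‖₊⁻¹ := by
  rcases subsingleton_or_nontrivial E with hsub | hnontriv
  · exact Or.inl hsub
  · have hnorm : ‖((ContinuousLinearEquiv.refl ℝ E).symm : E →L[ℝ] E)‖₊ = 1 :=
      NNReal.eq (ContinuousLinearMap.norm_id (𝕜 := ℝ))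
    exact Or.inr (by rwa [hnorm, inv_one])

theorem bijOn_interior_id_add {E : Type*} [NormedAddCommGroup E] [NormedSpace ℝ E]
    [CompleteSpace E] {K : Set E} (hK : IsCompact K) (hconv : Convex ℝ K) {g : E → E} {c : NNReal}
    (hc : c < 1) (hg : LipschitzOnWith c g K)
    (hmaps : MapsTo (fun x => x + g x) (interior K) (interior K))
    (hfix : ∀ x ∈ frontier K, g x = 0) :
    BijOn (fun x => x + g x) (interior K) (interior K) := by
  have happ := approximatesLinearOn_id_add (𝕜 := ℝ) hg
  have hclosure : closure (interior K) ⊆ K := closure_minimal interior_subset hK.isClosed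
  have hopen : IsOpen ((fun x => x + g x) '' interior K) :=
    (happ.mono_set interior_subset).open_image
      (ContinuousLinearEquiv.refl ℝ E).toNonlinearRightInverse isOpen_interior
      (subsingleton_or_lt_inv_nnnorm_refl hc)
  refine BijOn.mk hmaps ((happ.injOn (subsingleton_or_lt_inv_nnnorm_refl hc)).mono interior_subset)
    (image_eq_self_of_isOpen_image hconv.interior.isPreconnected
      (hK.of_isClosed_subset isClosed_closure hclosure) (happ.continuousOn.mono hclosure) hmaps
      (fun x hx => ?_) hopen).superset
  rw [hfix x ⟨subset_closure (hclosure hx.1), hx.2⟩, add_zero]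

variable {E : Type*} [NormedAddCommGroup E] [NormedSpace ℝ E]

theorem eventually_forall_det_one_add_smul_pos {X : Type*} [TopologicalSpace X] {K : Set X}
    (hK : IsCompact K) {A : X → E →L[ℝ] E} (hA : ContinuousOn A K) :
    ∀ᶠ t : ℝ in 𝓝 0, ∀ x ∈ K, 0 < (1 + t • A x).det := by
  have hdet : ∀ᶠ p : ℝ × (E →L[ℝ] E) in 𝓝 0 ×ˢ 𝓝ˢ (A '' K), 0 < (1 + p.1 • p.2).det := by
    rw [← nhdsSet_singleton, ← isCompact_singleton.nhdsSet_prod_eq (hK.image_of_continuousOn hA)]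
    have hcont : Continuous fun p : ℝ × (E →L[ℝ] E) => (1 + p.1 • p.2).det :=
      ContinuousLinearMap.continuous_det.comp (by fun_prop)
    refine (isOpen_lt continuous_const hcont).mem_nhdsSet.2 ?_
    rintro ⟨t, L⟩ ⟨rfl, -⟩
    simp [ContinuousLinearMap.det]
  obtain ⟨P, hP, Q, hQ, h⟩ := eventually_prod_iff.1 hdet
  filter_upwards [hP] with t ht x hx
  exact h ht (hQ.self_of_nhdsSet _ (mem_image_of_mem A hx))

variable [FiniteDimensional ℝ E] [MeasurableSpace E] [BorelSpace E] (μ : Measure E)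
  [μ.IsAddHaarMeasure]

theorem eventually_setIntegral_det_one_add_smul_fderiv {K : Set E} (hK : IsCompact K)
    (hconv : Convex ℝ K) {g : E → E} (hg : ∀ x ∈ K, ContDiffAt ℝ 1 g x)
    (hmaps : ∀ x ∈ K, x + g x ∈ K) (hfix : ∀ x ∈ frontier K, g x = 0) :
    ∀ᶠ t : ℝ in 𝓝[>] 0,
      ∫ x in interior K, (1 + t • fderiv ℝ g x).det ∂μ = μ.real (interior K) := by
  obtain ⟨L, hL⟩ := ContDiffOn.exists_lipschitzOnWith (n := 1)
    (fun x hx => (hg x hx).contDiffWithinAt) one_ne_zero hconv hK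
  have hdet : ∀ᶠ t : ℝ in 𝓝 0, ∀ x ∈ K, 0 < (1 + t • fderiv ℝ g x).det :=
    eventually_forall_det_one_add_smul_pos hK fun x hx =>
      ((hg x hx).continuousAt_fderiv one_ne_zero).continuousWithinAt
  have hsmall : ∀ᶠ t : ℝ in 𝓝 0, ‖t‖₊ * L < 1 :=
    (by fun_prop : Continuous fun t : ℝ => ‖t‖₊ * L).continuousAt.eventually_lt_const (by simp)
  filter_upwards [nhdsWithin_le_nhds hdet, nhdsWithin_le_nhds hsmall,
    nhdsWithin_le_nhds (gt_mem_nhds one_pos), self_mem_nhdsWithin] with t hdet hsmall ht1 ht0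
  have hmaps_t : MapsTo (fun x => x + t • g x) (interior K) (interior K) := fun x hx => by
    have := hconv.combo_interior_self_mem_interior hx (hmaps x (interior_subset hx))
      (sub_pos.2 ht1) (le_of_lt ht0) (sub_add_cancel 1 t)
    convert! this using 1
    module
  have hbij : BijOn (fun x => x + t • g x) (interior K) (interior K) :=
    bijOn_interior_id_add hK hconv hsmall ((lipschitzWith_smul t).comp_lipschitzOnWith hL) hmaps_t
      fun x hx => by rw [hfix x hx, smul_zero]
  have hderiv : ∀ x ∈ interior K, HasFDerivWithinAt (fun x => x + t • g x)
      (1 + t • fderiv ℝ g x) (interior K) x := fun x hx =>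
    ((hasFDerivAt_id x).add (((hg x (interior_subset hx)).differentiableAt
      one_ne_zero).hasFDerivAt.const_smul t)).hasFDerivWithinAt
  calc ∫ x in interior K, (1 + t • fderiv ℝ g x).det ∂μ
      = ∫ x in interior K, |(1 + t • fderiv ℝ g x).det| • (1 : ℝ) ∂μ :=
        setIntegral_congr_fun isOpen_interior.measurableSet fun x hx => by
          rw [smul_eq_mul, mul_one, abs_of_pos (hdet x (interior_subset hx))]
    _ = ∫ _ in (fun x => x + t • g x) '' interior K, (1 : ℝ) ∂μ :=
        (integral_image_eq_integral_abs_det_fderiv_smul μ isOpen_interior.measurableSet hderiv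
          hbij.injOn fun _ => 1).symm
    _ = μ.real (interior K) := by
        rw [hbij.image_eq, setIntegral_const, smul_eq_mul, mul_one]

theorem setIntegral_det_one_add_fderiv {K : Set E} (hK : IsCompact K)
    (hconv : Convex ℝ K) {g : E → E} (hg : ∀ x ∈ K, ContDiffAt ℝ 1 g x)
    (hmaps : ∀ x ∈ K, x + g x ∈ K) (hfix : ∀ x ∈ frontier K, g x = 0) :
    ∫ x in interior K, (1 + fderiv ℝ g x).det ∂μ = μ.real (interior K) := by
  have hint (t : ℝ) : IntegrableOn (fun x => (1 + t • fderiv ℝ g x).det) (interior K) μ := by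
    refine (ContinuousOn.integrableOn_compact hK fun x hx => ?_).mono_set interior_subset
    exact (ContinuousLinearMap.continuous_det.continuousAt.comp (continuousAt_const.add
      (((hg x hx).continuousAt_fderiv one_ne_zero).const_smul t))).continuousWithinAt
  obtain ⟨P, hP⟩ := exists_polynomial_eval_eq_integral
    (fun x => exists_polynomial_eval_eq_det_one_add_smul (fderiv ℝ g x : E →ₗ[ℝ] E)) hint
  have hP_const : P = Polynomial.C (μ.real (interior K)) :=
    polynomial_eq_C_of_eventually_eval_eq <|
      (eventually_setIntegral_det_one_add_smul_fderiv μ hK hconv hg hmaps hfix).mono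
        fun t ht => (hP t).trans ht
  calc ∫ x in interior K, (1 + fderiv ℝ g x).det ∂μ
      = ∫ x in interior K, (1 + (1 : ℝ) • fderiv ℝ g x).det ∂μ := by simp only [one_smul]
    _ = P.eval 1 := (hP 1).symm
    _ = μ.real (interior K) := by rw [hP_const, Polynomial.eval_C]

end Perturbation

/-! ### Brouwer's fixed point theorem -/

section NoRetraction

variable {E : Type*} [NormedAddCommGroup E] [InnerProductSpace ℝ E] [FiniteDimensional ℝ E]

theorem det_eq_zero_of_eventually_norm_eq {r : E → E} {r' : E →L[ℝ] E} {x : E} {c : ℝ}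
    (hc : c ≠ 0) (hr : HasFDerivAt r r' x) (hnorm : ∀ᶠ y in 𝓝 x, ‖r y‖ = c) : r'.det = 0 := by
  by_contra hdet
  have hunit : IsUnit (r' : E →ₗ[ℝ] E) :=
    (LinearMap.isUnit_iff_isUnit_det _).2 (isUnit_iff_ne_zero.2 hdet)
  have hsurj : Function.Surjective r' := ((Module.End.isUnit_iff _).1 hunit).surjective
  obtain ⟨w, hw⟩ := hsurj (r x)
  have hconst : HasFDerivAt (fun y => ‖r y‖ ^ 2) (0 : E →L[ℝ] ℝ) x :=
    (hasFDerivAt_const (c ^ 2) x).congr_of_eventuallyEq <| hnorm.mono fun y hy => by simp only [hy]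
  have hinner := congrArg (fun L : E →L[ℝ] ℝ => L w) (hr.norm_sq.unique hconst)
  simp [hw, hnorm.self_of_nhds, hc] at hinner

theorem not_exists_contDiffAt_retraction_sphere :
    ¬ ∃ r : E → E, (∀ x ∈ Metric.closedBall (0 : E) 1, ContDiffAt ℝ 1 r x) ∧
      (∀ x ∈ Metric.closedBall (0 : E) 1, ‖r x‖ = 1) ∧ ∀ x : E, ‖x‖ = 1 → r x = x := by
  rintro ⟨r, hr, hnorm, hfix⟩
  let _ : MeasurableSpace E := borel E
  have _ : BorelSpace E := ⟨rfl⟩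
  set B := Metric.closedBall (0 : E) 1
  have hball : Metric.ball (0 : E) 1 ⊆ interior B :=
    interior_maximal Metric.ball_subset_closedBall Metric.isOpen_ball
  have hvol : 0 < (volume : Measure E).real (interior B) :=
    ENNReal.toReal_pos ((Metric.measure_ball_pos volume 0 one_pos).trans_le
      (measure_mono hball)).ne'
      ((measure_mono interior_subset).trans_lt measure_closedBall_lt_top).ne
  have hint : ∫ x in interior B, (1 + fderiv ℝ (fun y => r y - y) x).det
      = volume.real (interior B) :=
    setIntegral_det_one_add_fderiv volume (isCompact_closedBall 0 1) (convex_closedBall 0 1)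
      (fun x hx => (hr x hx).sub contDiffAt_id)
      (fun x hx => by simpa [B] using (hnorm x hx).le)
      fun x hx => sub_eq_zero.2 <| hfix x <| by
        simpa using Metric.frontier_closedBall_subset_sphere hx
  have hdet : ∀ x ∈ interior B, (1 + fderiv ℝ (fun y => r y - y) x).det = 0 := fun x hx => by
    have hderiv := ((hr x (interior_subset hx)).differentiableAt one_ne_zero).hasFDerivAt
    have hsub : fderiv ℝ (fun y => r y - y) x = fderiv ℝ r x - 1 :=
      (hderiv.sub (hasFDerivAt_id x)).fderiv
    rw [hsub, add_sub_cancel]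
    refine det_eq_zero_of_eventually_norm_eq one_ne_zero hderiv ?_
    filter_upwards [mem_interior_iff_mem_nhds.1 hx] with y hy using hnorm y hy
  rw [setIntegral_eq_zero_of_forall_eq_zero hdet] at hint
  exact hvol.ne hint

end NoRetraction

section InnerProductSpace

open scoped RealInnerProductSpace

variable {E : Type*} [NormedAddCommGroup E] [InnerProductSpace ℝ E]

/-- The larger root `s` of `‖x + s • u‖ ^ 2 = 1`: for `x` in the closed unit ball, the time at
which the ray from `x` with velocity `u` leaves the ball. The value is `0` when `u = 0`. -/
noncomputable def ballExitTime (x u : E) : ℝ :=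
  (-⟪x, u⟫ + √(⟪x, u⟫ ^ 2 + ‖u‖ ^ 2 * (1 - ‖x‖ ^ 2))) / ‖u‖ ^ 2

theorem norm_add_ballExitTime_smul {x u : E} (hx : ‖x‖ ≤ 1) (hu : u ≠ 0) :
    ‖x + ballExitTime x u • u‖ = 1 := by
  have hu2 : ‖u‖ ^ 2 ≠ 0 := by simpa using hu
  have hdisc : 0 ≤ ⟪x, u⟫ ^ 2 + ‖u‖ ^ 2 * (1 - ‖x‖ ^ 2) := by
    have : 0 ≤ 1 - ‖x‖ ^ 2 := sub_nonneg.2 (pow_le_one₀ (norm_nonneg x) hx)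
    positivity
  have hroot : ballExitTime x u * ‖u‖ ^ 2 + ⟪x, u⟫ = √(⟪x, u⟫ ^ 2 + ‖u‖ ^ 2 * (1 - ‖x‖ ^ 2)) := by
    rw [ballExitTime, div_mul_cancel₀ _ hu2]
    ring
  have hquad : ‖u‖ ^ 2 * ‖x + ballExitTime x u • u‖ ^ 2 = ‖u‖ ^ 2 * 1 := by
    rw [norm_add_sq_real, inner_smul_right, norm_smul, mul_pow, Real.norm_eq_abs, sq_abs]
    linear_combination congrArg (· ^ 2) hroot + Real.sq_sqrt hdisc
  exact (pow_eq_one_iff_of_nonneg (norm_nonneg _) two_ne_zero).1 (mul_left_cancel₀ hu2 hquad)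

theorem ballExitTime_eq_zero {x u : E} (hx : ‖x‖ = 1) (hxu : 0 ≤ ⟪x, u⟫) :
    ballExitTime x u = 0 := by
  simp [ballExitTime, hx, Real.sqrt_sq hxu]

theorem contDiffAt_ballExitTime {n : WithTop ℕ∞} {x u : E} (hx : ‖x‖ ≤ 1) (hu : u ≠ 0)
    (hxu : ‖x‖ = 1 → 0 < ⟪x, u⟫) :
    ContDiffAt ℝ n (fun p : E × E => ballExitTime p.1 p.2) (x, u) := by
  have hdisc : 0 < ⟪x, u⟫ ^ 2 + ‖u‖ ^ 2 * (1 - ‖x‖ ^ 2) := by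
    rcases hx.lt_or_eq with hlt | heq
    · have : 0 < 1 - ‖x‖ ^ 2 := sub_pos.2 (pow_lt_one₀ (norm_nonneg x) hlt two_ne_zero)
      positivity
    · have := hxu heq
      rw [heq]
      positivity
  have hinner : ContDiffAt ℝ n (fun p : E × E => ⟪p.1, p.2⟫) (x, u) :=
    contDiffAt_fst.inner ℝ contDiffAt_snd
  have hsq : ContDiffAt ℝ n (fun p : E × E => ‖p.2‖ ^ 2) (x, u) := contDiffAt_snd.norm_sq ℝ
  have hsqrt := ((hinner.pow 2).add (hsq.mul
    (contDiffAt_const.sub (contDiffAt_fst.norm_sq ℝ)))).sqrt hdisc.ne'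
  exact (hinner.neg.add hsqrt).div hsq (by simpa using hu)

variable [FiniteDimensional ℝ E]

theorem exists_isFixedPt_of_contDiff {f : E → E} (hf : ContDiff ℝ 1 f)
    (hmaps : ∀ x, ‖x‖ ≤ 1 → ‖f x‖ < 1) : ∃ x, ‖x‖ ≤ 1 ∧ Function.IsFixedPt f x := by
  by_contra! hne
  have hu : ∀ x, ‖x‖ ≤ 1 → x - f x ≠ 0 := fun x hx h => hne x hx (sub_eq_zero.1 h).symm
  have hout : ∀ x, ‖x‖ = 1 → 0 < ⟪x, x - f x⟫ := fun x hx => by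
    have hlt : ⟪x, f x⟫ < 1 := by
      simpa [hx] using (real_inner_le_norm x (f x)).trans_lt
        (by simpa [hx] using hmaps x hx.le : ‖x‖ * ‖f x‖ < 1)
    rw [inner_sub_right, real_inner_self_eq_norm_sq, hx]
    linarith
  refine not_exists_contDiffAt_retraction_sphere
    ⟨fun x : E => x + ballExitTime x (x - f x) • (x - f x), fun x hx => ?_, fun x hx => ?_,
      fun x hx => ?_⟩
  · have hx1 : ‖x‖ ≤ 1 := by simpa using hx
    have hdir : ContDiffAt ℝ 1 (fun y => y - f y) x := contDiffAt_id.sub hf.contDiffAt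
    have htime : ContDiffAt ℝ 1 (fun y => ballExitTime y (y - f y)) x :=
      ContDiffAt.comp (g := fun q : E × E => ballExitTime q.1 q.2) (f := fun y => (y, y - f y)) x
        (contDiffAt_ballExitTime hx1 (hu x hx1) (hout x)) (contDiffAt_id.prodMk hdir)
    exact contDiffAt_id.add (htime.smul hdir)
  · have hx1 : ‖x‖ ≤ 1 := by simpa using hx
    exact norm_add_ballExitTime_smul hx1 (hu x hx1)
  · simp only [ballExitTime_eq_zero hx (hout x hx).le, zero_smul, add_zero]

theorem exists_norm_sub_lt_of_continuous {f : E → E} (hf : Continuous f)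
    (hle : ∀ x, ‖f x‖ ≤ 1) {ε : ℝ} (hε : 0 < ε) : ∃ x, ‖x‖ ≤ 1 ∧ ‖x - f x‖ < ε := by
  obtain ⟨p, hp, hpf, -⟩ := hf.exists_contDiff_approx 1 (ε := fun _ => ε / 2) continuous_const
    fun _ => half_pos hε
  have hpos : 0 < 1 + ε / 2 := by positivity
  have hp_norm (x : E) : ‖p x‖ < 1 + ε / 2 := by
    have := norm_le_norm_add_norm_sub' (p x) (f x)
    have := hpf x
    rw [dist_eq_norm] at this
    linarith [hle x]
  obtain ⟨x, hx, hfix⟩ := exists_isFixedPt_of_contDiff (f := fun x => (1 + ε / 2)⁻¹ • p x)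
    (contDiff_const.smul hp) fun x _ => by
      rw [norm_smul, norm_inv, Real.norm_of_nonneg hpos.le, inv_mul_lt_one₀ hpos]
      exact hp_norm x
  have hpx : p x = x + (ε / 2) • x := by
    rw [(inv_smul_eq_iff₀ hpos.ne').1 hfix, add_smul, one_smul]
  refine ⟨x, hx, ?_⟩
  calc ‖x - f x‖ = ‖(p x - f x) - (ε / 2) • x‖ := by rw [hpx]; congr 1; abel
    _ ≤ ‖p x - f x‖ + ‖(ε / 2) • x‖ := norm_sub_le _ _
    _ < ε / 2 + ε / 2 := by
      refine add_lt_add_of_lt_of_le (by simpa [dist_eq_norm] using hpf x) ?_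
      rw [norm_smul, Real.norm_of_nonneg (half_pos hε).le]
      exact mul_le_of_le_one_right (half_pos hε).le hx
    _ = ε := add_halves ε

theorem exists_isFixedPt_of_norm_le_one {f : E → E} (hf : Continuous f) (hle : ∀ x, ‖f x‖ ≤ 1) :
    ∃ x, Function.IsFixedPt f x := by
  obtain ⟨x, -, hmin⟩ := (isCompact_closedBall (0 : E) 1).exists_isMinOn ⟨0, by simp⟩
    (continuous_id.sub hf).norm.continuousOn
  refine ⟨x, ?_⟩
  by_contra hne
  have hpos : 0 < ‖x - f x‖ := norm_pos_iff.2 (sub_ne_zero.2 (Ne.symm hne))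
  obtain ⟨y, hy, hlt⟩ := exists_norm_sub_lt_of_continuous hf hle hpos
  exact hlt.not_ge (hmin (mem_closedBall_zero_iff.2 hy))

theorem exists_isFixedPt_of_isBounded_range {f : E → E} (hf : Continuous f)
    (hbdd : Bornology.IsBounded (range f)) : ∃ x, Function.IsFixedPt f x := by
  obtain ⟨R, hR, hfR⟩ := hbdd.exists_pos_norm_le
  obtain ⟨x, hx⟩ := exists_isFixedPt_of_norm_le_one (f := fun x => R⁻¹ • f (R • x))
    (by fun_prop) fun x => by
      rw [norm_smul, norm_inv, Real.norm_of_nonneg hR.le, inv_mul_le_one₀ hR]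
      exact hfR _ (mem_range_self _)
  exact ⟨R • x, (inv_smul_eq_iff₀ hR.ne').1 hx⟩

end InnerProductSpace

theorem exists_continuousMap_retraction_of_convex {F : Type*} [NormedAddCommGroup F]
    [InnerProductSpace ℝ F] {K : Set F} (hne : K.Nonempty) (hcomplete : IsComplete K)
    (hconv : Convex ℝ K) : ∃ p : C(F, K), ∀ x : K, p x = x := by
  choose p hpK hp using exists_norm_eq_iInf_of_complete_convex hne hcomplete hconv
  have hvar (x : F) {w : F} (hw : w ∈ K) : inner ℝ (x - p x) (w - p x) ≤ 0 :=
    (norm_eq_iInf_iff_real_inner_le_zero hconv (hpK x)).1 (hp x) w hw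
  have hlip : LipschitzWith 1 p := LipschitzWith.of_dist_le_mul fun x y => by
    have hsq : ‖p x - p y‖ ^ 2 ≤ ‖x - y‖ * ‖p x - p y‖ := by
      refine le_trans ?_ (real_inner_le_norm _ _)
      have hxy := add_nonpos (hvar x (hpK y)) (hvar y (hpK x))
      rw [← real_inner_self_eq_norm_sq, ← sub_nonpos]
      convert! hxy using 1
      simp only [inner_sub_left, inner_sub_right]
      ring
    rw [NNReal.coe_one, one_mul, dist_eq_norm, dist_eq_norm]
    by_contra! hlt
    nlinarith [norm_nonneg (x - y)]
  refine ⟨⟨fun x => ⟨p x, hpK x⟩, hlip.continuous.subtype_mk _⟩, fun x => Subtype.ext ?_⟩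
  exact (sub_eq_zero.1 (real_inner_self_nonpos.1 (hvar (x : F) x.2))).symm

theorem exists_isFixedPt_of_isCompact_of_convex_of_inner {E : Type*} [NormedAddCommGroup E]
    [InnerProductSpace ℝ E] [FiniteDimensional ℝ E] {K : Set E} (hK : IsCompact K)
    (hconv : Convex ℝ K) (hne : K.Nonempty) {f : K → K} (hf : Continuous f) :
    ∃ x, Function.IsFixedPt f x := by
  obtain ⟨p, hp⟩ := exists_continuousMap_retraction_of_convex hne hK.isComplete hconv
  obtain ⟨x, hx⟩ := exists_isFixedPt_of_isBounded_range (f := fun x => (f (p x) : E))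
    (by fun_prop) (hK.isBounded.subset (range_subset_iff.2 fun x => (f (p x)).2))
  refine ⟨p x, Subtype.ext ?_⟩
  calc (f (p x) : E) = p (f (p x) : E) := (congrArg Subtype.val (hp _)).symm
    _ = p x := congrArg (fun z => (p z : E)) hx

theorem exists_isFixedPt_of_isCompact_of_convex {E : Type*} [AddCommGroup E] [Module ℝ E]
    [TopologicalSpace E] [IsTopologicalAddGroup E] [ContinuousSMul ℝ E] [T2Space E]
    [FiniteDimensional ℝ E] {K : Set E} (hK : IsCompact K) (hconv : Convex ℝ K)
    (hne : K.Nonempty) {f : K → K} (hf : Continuous f) : ∃ x, Function.IsFixedPt f x := by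
  let e : K ≃ₜ toEuclidean '' K := (toEuclidean (E := E)).toHomeomorph.image K
  obtain ⟨y, hy⟩ := exists_isFixedPt_of_isCompact_of_convex_of_inner (f := e ∘ f ∘ e.symm)
    (hK.image toEuclidean.continuous) (hconv.linear_image (toEuclidean (E := E)).toLinearMap)
    (hne.image _) (by fun_prop)
  exact ⟨e.symm y, e.eq_symm_apply.2 hy⟩

/-! ### Existence of Nash equilibria -/

section KyFan

variable {E : Type*} [AddCommGroup E] [Module ℝ E] [TopologicalSpace E] [IsTopologicalAddGroup E]
  [ContinuousSMul ℝ E] [T2Space E] [FiniteDimensional ℝ E] {K : Set E}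

theorem exists_mem_of_isOpen_fibers (hK : IsCompact K) (hconv : Convex ℝ K) (hne : K.Nonempty)
    {T : E → Set E} (hT_conv : ∀ y ∈ K, Convex ℝ (T y)) (hT_ne : ∀ y ∈ K, (T y ∩ K).Nonempty)
    (hT_open : ∀ z ∈ K, IsOpen {y | z ∈ T y}) : ∃ y ∈ K, y ∈ T y := by
  have _ : CompactSpace K := isCompact_iff_compactSpace.1 hK
  obtain ⟨g, hg⟩ := exists_continuous_forall_mem_convex_of_local_const
    (t := fun y : K => T y ∩ K) (fun y => (hT_conv y y.2).inter hconv) fun y => by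
      obtain ⟨z, hzT, hzK⟩ := hT_ne y y.2
      exact ⟨z, (continuous_subtype_val.continuousAt.eventually
        ((hT_open z hzK).mem_nhds hzT)).mono fun _ hw => ⟨hw, hzK⟩⟩
  obtain ⟨y, hy⟩ := exists_isFixedPt_of_isCompact_of_convex hK hconv hne
    (f := fun y => ⟨g y, (hg y).2⟩) (by fun_prop)
  have hgy : g y = y := congrArg Subtype.val hy
  exact ⟨y, y.2, hgy ▸ (hg y).1⟩

theorem exists_forall_nonneg_of_quasiconvexOn (hK : IsCompact K) (hconv : Convex ℝ K)
    (hne : K.Nonempty) {ψ : E → E → ℝ} (hψ_cont : ∀ z ∈ K, Continuous fun y => ψ y z)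
    (hψ_conv : ∀ y ∈ K, QuasiconvexOn ℝ K (ψ y)) (hψ_diag : ∀ y ∈ K, 0 ≤ ψ y y) :
    ∃ y ∈ K, ∀ z ∈ K, 0 ≤ ψ y z := by
  by_contra! h
  obtain ⟨y, hyK, -, hy⟩ := exists_mem_of_isOpen_fibers hK hconv hne
    (T := fun y => {z ∈ K | ψ y z < 0}) (fun y hy => (hψ_conv y hy).convex_lt 0)
    (fun y hy => (h y hy).imp fun _ hz => ⟨hz, hz.1⟩)
    (fun z hz => by
      simpa only [mem_ofPred_eq, hz, true_and] using isOpen_lt (hψ_cont z hz) continuous_const)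
  exact hy.not_ge (hψ_diag y hyK)

end KyFan

section Nash

theorem convexOn_sum {𝕜 M β κ : Type*} [Semiring 𝕜] [PartialOrder 𝕜] [AddCommMonoid M]
    [SMul 𝕜 M] [AddCommMonoid β] [PartialOrder β] [IsOrderedAddMonoid β] [Module 𝕜 β] {s : Set M}
    (hs : Convex 𝕜 s) {u : Finset κ} {f : κ → M → β} (hf : ∀ i ∈ u, ConvexOn 𝕜 s (f i)) :
    ConvexOn 𝕜 s fun x => ∑ i ∈ u, f i x := by
  rw [← Finset.sum_fn]
  exact Finset.sum_induction _ (ConvexOn 𝕜 s) (fun _ _ => ConvexOn.add) (convexOn_const 0 hs) hf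

variable {ι : Type*} [DecidableEq ι] {E : ι → Type*}

/-- The Nash equilibria of the game in which player `i` chooses a strategy in `S i` so as to
minimize the cost `φ i`. -/
def nashEquilibria (S : ∀ i, Set (E i)) (φ : ι → (∀ i, E i) → ℝ) : Set (∀ i, E i) :=
  {y | ∀ i, y i ∈ S i ∧ ∀ t ∈ S i, φ i y ≤ φ i (Function.update y i t)}

theorem nashEquilibria_subset_pi (S : ∀ i, Set (E i)) (φ : ι → (∀ i, E i) → ℝ) :
    nashEquilibria S φ ⊆ univ.pi S := fun _ hy i _ => (hy i).1

theorem mem_nashEquilibria_of_forall_sum_nonneg [Fintype ι] {S : ∀ i, Set (E i)}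
    {φ : ι → (∀ i, E i) → ℝ} {y : ∀ i, E i} (hy : y ∈ univ.pi S)
    (h : ∀ z ∈ univ.pi S, 0 ≤ ∑ i, (φ i (Function.update y i (z i)) - φ i y)) :
    y ∈ nashEquilibria S φ := by
  refine fun i => ⟨hy i trivial, fun t ht => sub_nonneg.1 ?_⟩
  have hz : Function.update y i t ∈ univ.pi S := (update_mem_pi_iff_of_mem hy).2 fun _ => ht
  refine (h _ hz).trans_eq ((Fintype.sum_eq_single i fun j hj => ?_).trans ?_)
  · rw [Function.update_of_ne hj, Function.update_eq_self, sub_self]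
  · rw [Function.update_self]

variable [∀ i, AddCommGroup (E i)] [∀ i, Module ℝ (E i)] [∀ i, TopologicalSpace (E i)]

theorem nonempty_nashEquilibria [Finite ι] [∀ i, IsTopologicalAddGroup (E i)]
    [∀ i, ContinuousSMul ℝ (E i)] [∀ i, T2Space (E i)] [∀ i, FiniteDimensional ℝ (E i)]
    {S : ∀ i, Set (E i)} (hS : ∀ i, IsCompact (S i)) (hS_conv : ∀ i, Convex ℝ (S i))
    (hS_ne : ∀ i, (S i).Nonempty) {φ : ι → (∀ i, E i) → ℝ} (hφ : ∀ i, Continuous (φ i))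
    (hφ_conv : ∀ i, ∀ y ∈ univ.pi S, ConvexOn ℝ (S i) fun t => φ i (Function.update y i t)) :
    (nashEquilibria S φ).Nonempty := by
  have := Fintype.ofFinite ι
  have hconv : Convex ℝ (univ.pi S) := convex_pi fun i _ => hS_conv i
  -- The Nikaido–Isoda function merges the players' separate optimality conditions into one.
  let ψ : (∀ i, E i) → (∀ i, E i) → ℝ :=
    fun y z => ∑ i, (φ i (Function.update y i (z i)) - φ i y)
  have hψ_cont (z : ∀ i, E i) : Continuous fun y => ψ y z :=
    continuous_finsetSum _ fun i _ =>
      ((hφ i).comp (continuous_id.update i continuous_const)).sub (hφ i)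
  have hψ_conv : ∀ y ∈ univ.pi S, ConvexOn ℝ (univ.pi S) (ψ y) := fun y hy =>
    convexOn_sum hconv fun i _ => (((hφ_conv i y hy).comp_linearMap (LinearMap.proj i)).subset
      (fun _ hz => mem_univ_pi.1 hz i) hconv).sub (concaveOn_const (φ i y) hconv)
  have hψ_diag (y : ∀ i, E i) : ψ y y = 0 := by
    simp only [ψ, Function.update_eq_self, sub_self, Finset.sum_const_zero]
  obtain ⟨y, hy, hnonneg⟩ := exists_forall_nonneg_of_quasiconvexOn (isCompact_univ_pi hS) hconv
    (univ_pi_nonempty_iff.2 hS_ne) (fun z _ => hψ_cont z)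
    (fun y hy => (hψ_conv y hy).quasiconvexOn) (fun y _ => (hψ_diag y).ge)
  exact ⟨y, mem_nashEquilibria_of_forall_sum_nonneg hy hnonneg⟩

end Nash

/-! ### Semicontinuity of correspondences and marginal functions -/

section Correspondences

variable {α : Type*} [TopologicalSpace α]

theorem isClosed_setOf_subset_of_lowerHemicontinuous {β : Type*} [TopologicalSpace β]
    {F C : α → Set β} (hF : LowerHemicontinuous F) (hC : IsClosed {p : α × β | p.2 ∈ C p.1}) :
    IsClosed {x | F x ⊆ C x} := by
  have hopen : HasOpenCGraph fun x => (C x)ᶜ := hC.isOpen_compl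
  rw [← isOpen_compl_iff, compl_ofPred]
  simpa only [inter_univ, inter_compl_nonempty_iff] using
    lowerHemicontinuous_iff_isOpen_inter_nonempty.1 (hF.inter_hasOpenCGraph hopen) univ isOpen_univ

theorem isClosed_setOf_mem_nashEquilibria {ι : Type*} [DecidableEq ι] {E : ι → Type*}
    [∀ i, TopologicalSpace (E i)] {S : ∀ i, α → Set (E i)}
    (hS_closed : ∀ i, IsClosed {p : α × E i | p.2 ∈ S i p.1})
    (hS_lower : ∀ i, LowerHemicontinuous (S i)) {φ : ι → α → (∀ i, E i) → ℝ}
    (hφ : ∀ i, Continuous fun p : α × (∀ i, E i) => φ i p.1 p.2) :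
    IsClosed {p : α × (∀ i, E i) | p.2 ∈ nashEquilibria (fun i => S i p.1) fun i => φ i p.1} := by
  have hfeasible (i : ι) : IsClosed {p : α × (∀ i, E i) | p.2 i ∈ S i p.1} :=
    (hS_closed i).preimage (f := fun p : α × (∀ i, E i) => (p.1, p.2 i)) (by fun_prop)
  have hdeviation (i : ι) : Continuous fun q : (α × (∀ i, E i)) × E i =>
      φ i q.1.1 (Function.update q.1.2 i q.2) :=
    (hφ i).comp (continuous_fst.fst.prodMk (continuous_fst.snd.update i continuous_snd))
  have hoptimal (i : ι) : IsClosed {p : α × (∀ i, E i) |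
      S i p.1 ⊆ {t | φ i p.1 p.2 ≤ φ i p.1 (Function.update p.2 i t)}} :=
    isClosed_setOf_subset_of_lowerHemicontinuous ((hS_lower i).comp continuous_fst)
      (isClosed_le ((hφ i).comp continuous_fst) (hdeviation i))
  convert! isClosed_iInter fun i => (hfeasible i).inter (hoptimal i) using 1
  ext p
  simp only [nashEquilibria, mem_iInter, mem_inter_iff, mem_ofPred_eq, subset_def]

theorem lowerHemicontinuous_setOf_le {E : Type*} [AddCommGroup E] [Module ℝ E]
    [TopologicalSpace E] [ContinuousAdd E] [ContinuousSMul ℝ E] {Y : Set E}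
    {g : α → E → ℝ} {b : ℝ} (hg : ∀ y ∈ Y, Continuous fun x => g x y)
    (hconv : ∀ x, ConvexOn ℝ Y (g x)) (hslater : ∀ x, ∃ y ∈ Y, g x y < b) :
    LowerHemicontinuous fun x => {y ∈ Y | g x y ≤ b} := by
  refine lowerHemicontinuous_iff.2 fun x => lowerHemicontinuousAt_iff.2 ?_
  rintro U hU ⟨y, ⟨hyY, hyb⟩, hyU⟩
  obtain ⟨w, hwY, hwb⟩ := hslater x
  -- Moving slightly from `y` toward the Slater point `w` makes the constraint strict at `x`.
  have hnear : ∀ᶠ t : ℝ in 𝓝[>] 0, (1 - t) • y + t • w ∈ U := by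
    have hcont : Continuous fun t : ℝ => (1 - t) • y + t • w := by fun_prop
    refine nhdsWithin_le_nhds (hcont.continuousAt (hU.mem_nhds ?_))
    simpa using hyU
  obtain ⟨t, htU, ht0, ht1⟩ := (hnear.and (Ioo_mem_nhdsGT one_pos)).exists
  have hmem := (hconv x).1 hyY hwY (sub_pos.2 ht1).le ht0.le (sub_add_cancel 1 t)
  have hlt : g x ((1 - t) • y + t • w) < b :=
    calc g x ((1 - t) • y + t • w) ≤ (1 - t) * g x y + t * g x w :=
          (hconv x).2 hyY hwY (sub_pos.2 ht1).le ht0.le (sub_add_cancel 1 t)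
      _ < (1 - t) * b + t * b :=
          add_lt_add_of_le_of_lt (mul_le_mul_of_nonneg_left hyb (sub_pos.2 ht1).le)
            (mul_lt_mul_of_pos_left hwb ht0)
      _ = b := by ring
  filter_upwards [(hg _ hmem).continuousAt.eventually_lt_const hlt] with x' hx'
  exact ⟨_, ⟨hmem, hx'.le⟩, htU⟩

theorem upperHemicontinuous_of_isClosed_graph {β : Type*} [TopologicalSpace β] {F : α → Set β}
    {K : Set β} (hK : IsCompact K) (hF : IsClosed {p : α × β | p.2 ∈ F p.1})
    (hFK : ∀ x, F x ⊆ K) : UpperHemicontinuous F := by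
  refine upperHemicontinuous_iff_forall_isOpen.2 fun x U hU hxU => ?_
  have hescape : ∀ᶠ x' in 𝓝 x, ∀ y ∈ K \ U, y ∉ F x' :=
    (hK.diff hU).eventually_forall_of_forall_eventually fun y hy =>
      hF.isOpen_compl.mem_nhds fun hyF => hy.2 (hxU hyF)
  filter_upwards [hescape] with x' hx' y hy
  by_contra hyU
  exact hx' y ⟨hFK x' hy, hyU⟩ hy

theorem upperSemicontinuous_sSup_image {β : Type*} [TopologicalSpace β] {F : α → Set β}
    (hF : UpperHemicontinuous F) (hF_compact : ∀ x, IsCompact (F x)) (hF_ne : ∀ x, (F x).Nonempty)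
    {f : α → β → ℝ} (hf : UpperSemicontinuous fun p : α × β => f p.1 p.2) :
    UpperSemicontinuous fun x => sSup (f x '' F x) := by
  have hslice (x : α) : UpperSemicontinuousOn (f x) (F x) :=
    (hf.comp (Continuous.prodMk_right x)).upperSemicontinuousOn _
  intro x c hc
  have hlt : ∀ y ∈ F x, f x y < c := fun y hy =>
    (le_csSup ((hslice x).bddAbove_of_isCompact (hF_compact x)) (mem_image_of_mem _ hy)).trans_lt hc
  obtain ⟨u, v, hu, hv, hxu, hFv, huv⟩ := generalized_tube_lemma isCompact_singleton (hF_compact x)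
    (hf.isOpen_preimage c) (by rintro ⟨_, y⟩ ⟨rfl, hy⟩; exact hlt y hy)
  filter_upwards [hu.mem_nhds (hxu rfl), upperHemicontinuous_iff_forall_isOpen.1 hF x v hv hFv]
    with x' hx'u hx'v
  obtain ⟨y, hy, hmax⟩ := (hslice x').exists_isMaxOn (hF_ne x') (hF_compact x')
  have hsup : sSup (f x' '' F x') ≤ f x' y :=
    csSup_le ((hF_ne x').image _) (forall_mem_image.2 hmax)
  exact hsup.trans_lt (huv (mk_mem_prod hx'u (hx'v hy)))

end Correspondences

theorem convexOn_mul_add_mul_abs {s : Set ℝ} (hs : Convex ℝ s) (a : ℝ) {k : ℝ} (hk : 0 ≤ k) :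
    ConvexOn ℝ s fun y => a * y + k * |y| :=
  ((LinearMap.mul ℝ ℝ a).convexOn hs).add ((convexOn_norm hs).smul hk)

theorem stmt_12_general {α ι : Type*} [TopologicalSpace α] [Finite ι] [DecidableEq ι]
    {E : ι → Type*} [∀ i, AddCommGroup (E i)] [∀ i, Module ℝ (E i)] [∀ i, TopologicalSpace (E i)]
    [∀ i, IsTopologicalAddGroup (E i)] [∀ i, ContinuousSMul ℝ (E i)] [∀ i, T2Space (E i)]
    [∀ i, FiniteDimensional ℝ (E i)] {f : α → (∀ i, E i) → ℝ}
    (hf : UpperSemicontinuous fun p : α × (∀ i, E i) => f p.1 p.2)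
    {Y : ∀ i, Set (E i)} (hY : ∀ i, IsCompact (Y i))
    {g : ∀ i, α → E i → ℝ} (hg : ∀ i, Continuous fun p : α × E i => g i p.1 p.2)
    (hg_conv : ∀ i x, ConvexOn ℝ (Y i) (g i x)) {b : ι → ℝ}
    (hslater : ∀ i x, ∃ y ∈ Y i, g i x y < b i) {φ : ι → α → (∀ i, E i) → ℝ}
    (hφ : ∀ i, Continuous fun p : α × (∀ i, E i) => φ i p.1 p.2)
    (hφ_conv : ∀ i x, ∀ y ∈ univ.pi Y, ConvexOn ℝ (Y i) fun t => φ i x (Function.update y i t)) :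
    UpperSemicontinuous fun x => sSup (f x ''
      nashEquilibria (fun i => {y ∈ Y i | g i x y ≤ b i}) fun i => φ i x) := by
  let S (i : ι) (x : α) : Set (E i) := {y ∈ Y i | g i x y ≤ b i}
  let N (x : α) : Set (∀ i, E i) := nashEquilibria (fun i => S i x) fun i => φ i x
  have hS_closed (i : ι) : IsClosed {p : α × E i | p.2 ∈ S i p.1} :=
    ((hY i).isClosed.preimage continuous_snd).inter (isClosed_le (hg i) continuous_const)
  have hS_compact (i : ι) (x : α) : IsCompact (S i x) :=
    (hY i).of_isClosed_subset ((hS_closed i).preimage (Continuous.prodMk_right x)) fun _ => And.left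
  have hS_lower (i : ι) : LowerHemicontinuous (S i) :=
    lowerHemicontinuous_setOf_le (fun y _ => (hg i).comp (Continuous.prodMk_left y)) (hg_conv i)
      (hslater i)
  have hN_closed : IsClosed {p : α × (∀ i, E i) | p.2 ∈ N p.1} :=
    isClosed_setOf_mem_nashEquilibria hS_closed hS_lower hφ
  have hN_subset (x : α) : N x ⊆ univ.pi Y :=
    (nashEquilibria_subset_pi _ _).trans (pi_mono fun _ _ _ => And.left)
  have hN_compact (x : α) : IsCompact (N x) :=
    (isCompact_univ_pi hY).of_isClosed_subset (hN_closed.preimage (Continuous.prodMk_right x))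
      (hN_subset x)
  have hN_nonempty (x : α) : (N x).Nonempty :=
    nonempty_nashEquilibria (hS_compact · x) (fun i => (hg_conv i x).convex_le (b i))
      (fun i => (hslater i x).imp fun _ hy => ⟨hy.1, hy.2.le⟩)
      (fun i => (hφ i).comp (Continuous.prodMk_right x))
      fun i y hy => (hφ_conv i x y fun j hj => (hy j hj).1).subset (fun _ => And.left)
        ((hg_conv i x).convex_le (b i))
  exact upperSemicontinuous_sSup_image
    (upperHemicontinuous_of_isClosed_graph (isCompact_univ_pi hY) hN_closed hN_subset)
    hN_compact hN_nonempty hf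

/-- Key claim in the proof of Lemma 6: the marginal function V(x) = sup {f(x,y) : y ∈ Nash(x)} is upper semicontinuous. -/
theorem stmt_12
    (m I : ℕ) (hm : 1 ≤ m) (hI : 1 ≤ I)
    (X : Set (Fin m → ℝ)) (hXne : X.Nonempty) (hXc : IsCompact X)
    (f : (Fin m → ℝ) → (Fin I → ℝ) → ℝ)
    (hf : Continuous fun p : (Fin m → ℝ) × (Fin I → ℝ) => f p.1 p.2)
    (Y : Fin I → Set ℝ)
    (hYne : ∀ i, (Y i).Nonempty) (hYc : ∀ i, IsCompact (Y i))
    (hYconv : ∀ i, Convex ℝ (Y i)) (hY0 : ∀ i, (0 : ℝ) ∈ Y i)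
    (b l Sig : Fin I → ℝ)
    (hb : ∀ i, 0 < b i) (hl : ∀ i, 0 ≤ l i) (hSig : ∀ i, 0 ≤ Sig i)
    (μ : Fin I → (Fin m → ℝ) → ℝ) (hμ : ∀ i, Continuous (μ i))
    (S : Fin I → (Fin m → ℝ) → Set ℝ)
    (hS : ∀ i x, S i x = {y ∈ Y i | μ i x * y + l i * Real.sqrt (Sig i) * |y| ≤ b i})
    (φ : Fin I → (Fin m → ℝ) → (Fin I → ℝ) → ℝ)
    (hφc : ∀ i, Continuous fun p : (Fin m → ℝ) × (Fin I → ℝ) => φ i p.1 p.2)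
    (hφconv : ∀ i x y, ConvexOn ℝ Set.univ fun t : ℝ => φ i x (Function.update y i t))
    (Nash : (Fin m → ℝ) → Set (Fin I → ℝ))
    (hNash : ∀ x, Nash x = {y : Fin I → ℝ | ∀ i, y i ∈ S i x ∧
      ∀ t ∈ S i x, φ i x y ≤ φ i x (Function.update y i t)})
    (V : (Fin m → ℝ) → ℝ)
    (hV : ∀ x, V x = sSup ((f x) '' Nash x))
    : UpperSemicontinuous V := by
  have hV_eq : V = fun x => sSup (f x '' nashEquilibria
      (fun i => {y ∈ Y i | μ i x * y + l i * √(Sig i) * |y| ≤ b i}) fun i => φ i x) := by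
    funext x
    simp only [hV, hNash, hS, nashEquilibria]
  rw [hV_eq]
  exact stmt_12_general hf.upperSemicontinuous hYc (by fun_prop)
    (fun i x => convexOn_mul_add_mul_abs (hYconv i) (μ i x)
      (mul_nonneg (hl i) (Real.sqrt_nonneg _)))
    (fun i _ => ⟨0, hY0 i, by simpa using hb i⟩) hφc
    fun i x y _ => (hφconv i x y).subset (subset_univ _) (hYconv i)
end
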